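/- Let U be a clopen partition of X, N ∈ ℕ, s ∈ ℝ, f ∈ C(X), and let Z ⊆ X be analytic. Then M_N^s(U,f,Z) = sup{ M_N^s(U,f,K) : K ⊆ Z, K compact }. -/

import Mathlib

open Set Filter
open scoped ENNReal

section Defs
variable {X : Type*} [MetricSpace X]

/-- The Bowen ball of order `n` and radius `ε` centered at `x`. -/
def bowenBall (T : X → X) (n : ℕ) (ε : ℝ) (x : X) : Set X :=
  {y | ∀ i < n, dist (T^[i] x) (T^[i] y) < ε}

/-- Birkhoff sum `f_n(x) = ∑_{j<n} f(T^j x)`. -/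
def birkhoff (T : X → X) (f : X → ℝ) (n : ℕ) (x : X) : ℝ :=
  ∑ j ∈ Finset.range n, f (T^[j] x)

/-- Weight `exp(-s n + sup_{B_n(x,ε)} f_n)` of a Bowen ball, as `ℝ≥0∞`. -/
noncomputable def ballWeight (T : X → X) (f : X → ℝ) (s ε : ℝ) (p : X × ℕ) : ℝ≥0∞ :=
  ENNReal.ofReal (Real.exp (-(s * p.2) + sSup (birkhoff T f p.2 '' bowenBall T p.2 ε p.1)))

/-- `D` is a countable cover of `Z` by Bowen balls of radius `ε` and orders `≥ N`. -/
def IsBowenCover (T : X → X) (ε : ℝ) (N : ℕ) (Z : Set X) (D : Set (X × ℕ)) : Prop :=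
  D.Countable ∧ (∀ p ∈ D, N ≤ p.2) ∧ Z ⊆ ⋃ p ∈ D, bowenBall T p.2 ε p.1

/-- `M(Z,f,s,N,ε)`. -/
noncomputable def bowenM (T : X → X) (f : X → ℝ) (Z : Set X) (s : ℝ) (N : ℕ) (ε : ℝ) : ℝ≥0∞ :=
  ⨅ (D : Set (X × ℕ)) (_ : IsBowenCover T ε N Z D), ∑' p : D, ballWeight T f s ε p

/-- `m(Z,f,s,ε) = lim_{N→∞} M(Z,f,s,N,ε)` (an increasing limit). -/
noncomputable def bowenm (T : X → X) (f : X → ℝ) (Z : Set X) (s ε : ℝ) : ℝ≥0∞ :=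
  ⨆ N : ℕ, bowenM T f Z s N ε

/-- `P_B(T,f,Z,ε)`, the critical exponent. -/
noncomputable def bowenPressEps (T : X → X) (f : X → ℝ) (Z : Set X) (ε : ℝ) : ℝ :=
  sInf {s : ℝ | bowenm T f Z s ε = 0}

/-- Bowen topological pressure `P_B(T,f,Z) = lim_{ε→0} P_B(T,f,Z,ε)` (an increasing limit). -/
noncomputable def bowenPressure (T : X → X) (f : X → ℝ) (Z : Set X) : ℝ :=
  ⨆ ε ∈ Ioi (0:ℝ), bowenPressEps T f Z ε

/-- `E` is an `(n,ε)`-separated subset of `Z`. -/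
def IsSeparated (T : X → X) (n : ℕ) (ε : ℝ) (Z : Set X) (E : Finset X) : Prop :=
  ↑E ⊆ Z ∧ ∀ x ∈ E, ∀ y ∈ E, x ≠ y → ∃ i < n, ε < dist (T^[i] x) (T^[i] y)

/-- `P_n(T,f,Z,ε)`. -/
noncomputable def ucPn (T : X → X) (f : X → ℝ) (Z : Set X) (n : ℕ) (ε : ℝ) : ℝ :=
  sSup {r | ∃ E : Finset X, IsSeparated T n ε Z E ∧ r = ∑ x ∈ E, Real.exp (birkhoff T f n x)}

/-- `P(T,f,Z,ε)`. -/
noncomputable def ucPressEps (T : X → X) (f : X → ℝ) (Z : Set X) (ε : ℝ) : ℝ :=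
  Filter.limsup (fun n : ℕ => Real.log (ucPn T f Z n ε) / n) Filter.atTop

/-- Upper capacity topological pressure `P(T,f,Z)`. -/
noncomputable def ucPressure (T : X → X) (f : X → ℝ) (Z : Set X) : ℝ :=
  ⨆ ε ∈ Ioi (0:ℝ), ucPressEps T f Z ε

/-- The weighted quantity `W(K,f,s,N,ε)`: the infimum of `∑ c_i exp(-s n_i + sup_{B_i} f_{n_i})`
over countable families `{(x_i, n_i, c_i)}` with `n_i ≥ N`, `c_i > 0` and
`∑ c_i χ_{B_{n_i}(x_i,ε)} ≥ χ_K`. -/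
noncomputable def bowenW (T : X → X) (f : X → ℝ) (K : Set X) (s : ℝ) (N : ℕ) (ε : ℝ) : ℝ≥0∞ :=
  ⨅ (D : Set (X × ℕ × ℝ)) (_ : D.Countable ∧ (∀ p ∈ D, N ≤ p.2.1 ∧ 0 < p.2.2) ∧
      ∀ z ∈ K, 1 ≤ ∑' p : D,
        (bowenBall T p.1.2.1 ε p.1.1).indicator (fun _ => ENNReal.ofReal p.1.2.2) z),
    ∑' p : D, ENNReal.ofReal p.1.2.2 * ballWeight T f s ε (p.1.1, p.1.2.1)

noncomputable def bowenw (T : X → X) (f : X → ℝ) (K : Set X) (s ε : ℝ) : ℝ≥0∞ :=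
  ⨆ N : ℕ, bowenW T f K s N ε

noncomputable def weightedPressEps (T : X → X) (f : X → ℝ) (K : Set X) (ε : ℝ) : ℝ :=
  sInf {s : ℝ | bowenw T f K s ε = 0}

/-- Weighted topological pressure `P_W(T,f,K)`. -/
noncomputable def weightedPressure (T : X → X) (f : X → ℝ) (K : Set X) : ℝ :=
  ⨆ ε ∈ Ioi (0:ℝ), weightedPressEps T f K ε

/-- The variant `𝓜(Z,f,s,N,ε)` of `bowenM` using the value of `f_{n_i}` at the center. -/
noncomputable def bowenMc (T : X → X) (f : X → ℝ) (Z : Set X) (s : ℝ) (N : ℕ) (ε : ℝ) : ℝ≥0∞ :=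
  ⨅ (D : Set (X × ℕ)) (_ : IsBowenCover T ε N Z D),
    ∑' p : D, ENNReal.ofReal (Real.exp (-(s * (p : X × ℕ).2) + birkhoff T f (p : X × ℕ).2 (p : X × ℕ).1))

/-- The local measure-theoretic pressure
`P_μ(T,f,x) = lim_{ε→0} liminf_n (1/n) log (e^{f_n(x)} / μ(B_n(x,ε)))`. -/
noncomputable def measPressAt [MeasurableSpace X] (T : X → X) (f : X → ℝ) (μ : MeasureTheory.Measure X) (x : X) : ℝ :=
  ⨆ ε ∈ Ioi (0:ℝ),
    Filter.liminf (fun n : ℕ =>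
      (birkhoff T f n x - Real.log (μ (bowenBall T n ε x)).toReal) / n) Filter.atTop

/-- Measure-theoretic pressure `P_μ(T,f) = ∫ P_μ(T,f,x) dμ(x)`. -/
noncomputable def measPressure [MeasurableSpace X] (T : X → X) (f : X → ℝ) (μ : MeasureTheory.Measure X) : ℝ :=
  ∫ x, measPressAt T f μ x ∂μ

end Defs

section Symbolic
variable {X : Type*} [MetricSpace X]

/-- The cylinder `X(U) = U_1 ∩ T⁻¹U_2 ∩ … ∩ T^{-(n-1)}U_n` of a string `U`. -/
def cylinder (T : X → X) (U : Σ n : ℕ, Fin n → Set X) : Set X :=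
  ⋂ j : Fin U.1, T^[j.1] ⁻¹' U.2 j

/-- The weight `exp(-s m(U) + sup_{X(U)} f_{m(U)})` of a string, with the convention that
the weight is `0` when `X(U) = ∅` (i.e. the sup is `-∞`). -/
noncomputable def cylWeight (T : X → X) (f : X → ℝ) (s : ℝ) (U : Σ n : ℕ, Fin n → Set X) : ℝ≥0∞ :=
  haveI := Classical.propDecidable (cylinder T U = ∅)
  if cylinder T U = ∅ then 0
  else ENNReal.ofReal (Real.exp (-(s * U.1) + sSup (birkhoff T f U.1 '' cylinder T U)))

/-- `M_N^s(𝒰,f,Z)`: infimum over families `Λ` of strings of length `≥ N` in the alphabet `𝒰`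
whose cylinders cover `Z`. -/
noncomputable def MUN (T : X → X) (f : X → ℝ) (𝒰 : Finset (Set X)) (s : ℝ) (N : ℕ)
    (Z : Set X) : ℝ≥0∞ :=
  ⨅ (Λ : Set (Σ n : ℕ, Fin n → Set X))
    (_ : Λ.Countable ∧ (∀ V ∈ Λ, N ≤ V.1 ∧ ∀ j, V.2 j ∈ 𝒰) ∧ Z ⊆ ⋃ V ∈ Λ, cylinder T V),
    ∑' V : Λ, cylWeight T f s V

/-- A finite partition of `X` into clopen sets. -/
def IsClopenPartition (𝒰 : Finset (Set X)) : Prop :=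
  (∀ A ∈ 𝒰, IsClopen A) ∧ (⋃ A ∈ 𝒰, A) = Set.univ ∧ (𝒰 : Set (Set X)).PairwiseDisjoint id

end Symbolic

section Entropy
variable {X : Type*} [MetricSpace X] [MeasurableSpace X]

/-- Entropy of a finite collection of sets w.r.t. a measure. -/
noncomputable def partEntropy (μ : MeasureTheory.Measure X) (P : Finset (Set X)) : ℝ :=
  ∑ A ∈ P, -((μ A).toReal * Real.log (μ A).toReal)

/-- `P` is a finite measurable partition of `X` (mod `μ`-null sets). -/
def IsMeasPartition (μ : MeasureTheory.Measure X) (P : Finset (Set X)) : Prop :=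
  (∀ A ∈ P, MeasurableSet A) ∧ μ (⋃ A ∈ P, A)ᶜ = 0 ∧ (P : Set (Set X)).PairwiseDisjoint id

/-- The dynamical refinement `⋁_{i=0}^{n-1} T^{-i} P`. -/
noncomputable def dynRefine (T : X → X) (P : Finset (Set X)) (n : ℕ) : Finset (Set X) := by
  classical
  exact (Finset.univ : Finset (Fin n → {A // A ∈ P})).image
    fun g => ⋂ i : Fin n, T^[i.1] ⁻¹' (g i : Set X)

/-- Kolmogorov–Sinai measure-theoretic entropy `h_μ(T)`, using the fact that the defining
limit `lim_n H(⋁_{i<n} T^{-i}P)/n` equals the infimum over `n ≥ 1`. -/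
noncomputable def ksEntropy (T : X → X) (μ : MeasureTheory.Measure X) : ℝ :=
  ⨆ P ∈ {P : Finset (Set X) | IsMeasPartition μ P},
    ⨅ n ∈ Ici (1 : ℕ), partEntropy μ (dynRefine T P n) / n

end Entropy


namespace TreeCap

/-- `Λ` covers `Z`. -/
def Cov {X S : Type*} (word : ℕ → X → S) (Z : Set X) (Λ : Set S) : Prop :=
  ∀ z ∈ Z, ∃ n, word n z ∈ Λ

/-- sum of weights -/
noncomputable def sm {S : Type*} (w : S → ℝ≥0∞) (Λ : Set S) : ℝ≥0∞ := ∑' s, Λ.indicator w s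

/-- abstract outer measure -/
noncomputable def M {X S : Type*} (word : ℕ → X → S) (w : S → ℝ≥0∞) (Z : Set X) : ℝ≥0∞ :=
  ⨅ Λ : {Λ : Set S // Cov word Z Λ}, sm w Λ.1

/-- abstract cylinder -/
def cyl {X S : Type*} (word : ℕ → X → S) (s : S) : Set X := {y | ∃ n, word n y = s}

variable {X S : Type*} {word : ℕ → X → S} {w : S → ℝ≥0∞}

lemma M_le {Z : Set X} {Λ : Set S} (h : Cov word Z Λ) : M word w Z ≤ sm w Λ :=
  iInf_le (fun Λ : {Λ : Set S // Cov word Z Λ} => sm w Λ.1) ⟨Λ, h⟩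

lemma M_mono {A B : Set X} (h : A ⊆ B) : M word w A ≤ M word w B :=
  le_iInf fun Λ => M_le fun z hz => Λ.2 z (h hz)

lemma exists_cov {Z : Set X} (hfin : M word w Z ≠ ⊤) {e : ℝ≥0∞} (he : e ≠ 0) :
    ∃ Λ, Cov word Z Λ ∧ sm w Λ ≤ M word w Z + e := by
  have h : M word w Z < M word w Z + e := ENNReal.lt_add_right hfin he
  obtain ⟨Λ, hΛ⟩ := iInf_lt_iff.1 h
  exact ⟨Λ.1, Λ.2, hΛ.le⟩

lemma ind_aux (P Λ Γ : Set S) (hP : P ⊆ Λ ∪ Γ) (s : S) :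
    P.indicator w s + ((Λ ∩ Γ) ∪ ((Λ ∪ Γ) \ P)).indicator w s ≤
      Λ.indicator w s + Γ.indicator w s := by
  classical
  have hPs := @hP s
  by_cases a : s ∈ Λ <;> by_cases b : s ∈ Γ <;> by_cases c : s ∈ P <;>
    simp [a, b, c] at hPs ⊢

lemma strong_sub (hlen : ∀ n m x y, word n x = word m y → n = m)
    (hpre : ∀ n k x y, k ≤ n → word n x = word n y → word k x = word k y) (A B : Set X) :
    M word w (A ∪ B) + M word w (A ∩ B) ≤ M word w A + M word w B := by
  conv_rhs => rw [M, M]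
  rw [ENNReal.iInf_add]
  refine le_iInf fun Λ => ?_
  rw [ENNReal.add_iInf]
  refine le_iInf fun Γ => ?_
  obtain ⟨Λ, hΛ⟩ := Λ
  obtain ⟨Γ, hΓ⟩ := Γ
  set P : Set S := {s | s ∈ Λ ∪ Γ ∧ ∃ n x, s = word n x ∧ ∀ k < n, word k x ∉ Λ ∪ Γ} with hP
  set Q : Set S := (Λ ∩ Γ) ∪ ((Λ ∪ Γ) \ P) with hQ
  have h1 : Cov word (A ∪ B) P := by
    intro z hz
    classical
    have hex : ∃ n, word n z ∈ Λ ∪ Γ := by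
      rcases hz with hz | hz
      · obtain ⟨n, hn⟩ := hΛ z hz
        exact ⟨n, Or.inl hn⟩
      · obtain ⟨n, hn⟩ := hΓ z hz
        exact ⟨n, Or.inr hn⟩
    exact ⟨Nat.find hex, Nat.find_spec hex, _, z, rfl, fun k hk => Nat.find_min hex hk⟩
  have key : ∀ n m z, n < m → word n z ∈ Λ ∪ Γ → word m z ∉ P := by
    rintro n m z hnm hn ⟨-, m', y, hy, hmin⟩
    have hmm := hlen _ _ _ _ hy
    subst hmm
    apply hmin n hnm
    rwa [← hpre m n z y hnm.le hy]
  have h2 : Cov word (A ∩ B) Q := by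
    rintro z ⟨hzA, hzB⟩
    obtain ⟨n, hn⟩ := hΛ z hzA
    obtain ⟨m, hm⟩ := hΓ z hzB
    rcases lt_trichotomy n m with h | h | h
    · exact ⟨m, Or.inr ⟨Or.inr hm, key n m z h (Or.inl hn)⟩⟩
    · subst h
      exact ⟨n, Or.inl ⟨hn, hm⟩⟩
    · exact ⟨n, Or.inr ⟨Or.inl hn, key m n z h (Or.inr hm)⟩⟩
  refine (add_le_add (M_le h1) (M_le h2)).trans ?_
  simp only [sm]
  rw [← ENNReal.tsum_add, ← ENNReal.tsum_add]
  refine ENNReal.tsum_le_tsum fun s => ?_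
  exact ind_aux P Λ Γ (fun s h => h.1) s

lemma M_cyl_le (s : S) : M word w (cyl word s) ≤ w s := by
  refine (M_le (Λ := {s}) fun z hz => hz).trans ?_
  classical
  rw [sm, tsum_eq_single s]
  · simp
  · intro b hb
    simp [hb]

lemma M_le_sm_cyl [Countable S] (hw : ∀ s, w s ≠ ⊤) {Z : Set X} {Λ : Set S}
    (h : Cov word Z Λ) : M word w Z ≤ sm (fun s => M word w (cyl word s)) Λ := by
  refine ENNReal.le_of_forall_pos_le_add fun e he _ => ?_
  obtain ⟨d, hd, hds⟩ := ENNReal.exists_pos_sum_of_countable (ε := (e : ℝ≥0∞))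
    (by simpa using he.ne') S
  have hc : ∀ s, ∃ G, Cov word (cyl word s) G ∧ sm w G ≤ M word w (cyl word s) + d s :=
    fun s => exists_cov (ne_top_of_le_ne_top (hw s) (M_cyl_le s)) (by simpa using (hd s).ne')
  choose G hG hGs using hc
  have hcov : Cov word Z {t | ∃ s ∈ Λ, t ∈ G s} := by
    intro z hz
    obtain ⟨n, hn⟩ := h z hz
    obtain ⟨m, hm⟩ := hG _ z ⟨n, rfl⟩
    exact ⟨m, _, hn, hm⟩
  refine (M_le hcov).trans ?_
  classical
  calc sm w {t | ∃ s ∈ Λ, t ∈ G s}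
      ≤ ∑' t, ∑' s, Λ.indicator (fun s => (G s).indicator w t) s := by
        refine ENNReal.tsum_le_tsum fun t => ?_
        by_cases ht : ∃ s ∈ Λ, t ∈ G s
        · obtain ⟨s, hs, hts⟩ := ht
          refine le_trans ?_ (ENNReal.le_tsum s)
          simp only [Set.indicator_of_mem hs, Set.indicator_of_mem hts]
          exact Set.indicator_le_self' (fun _ _ => zero_le) t
        · rw [Set.indicator_of_notMem (by simpa using ht)]
          exact zero_le
    _ = ∑' s, ∑' t, Λ.indicator (fun s => (G s).indicator w t) s := ENNReal.tsum_comm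
    _ ≤ ∑' s, (Λ.indicator (fun s => M word w (cyl word s)) s + d s) := by
        refine ENNReal.tsum_le_tsum fun s => ?_
        by_cases hs : s ∈ Λ
        · simp only [Set.indicator_of_mem hs]
          exact hGs s
        · simp [Set.indicator_of_notMem hs]
    _ = sm (fun s => M word w (cyl word s)) Λ + ∑' s, (d s : ℝ≥0∞) := ENNReal.tsum_add
    _ ≤ _ := by gcongr

/-- stopping families -/
lemma exists_stop (hlen : ∀ n m x y, word n x = word m y → n = m)
    (hpre : ∀ n k x y, k ≤ n → word n x = word n y → word k x = word k y)
    (I : Set S) (H : Set X) (Λ : Set S) (hΛ : Cov word H Λ) :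
    sm (fun s => M word w (cyl word s))
      {s | (∃ x i, s = word i x ∧ ∀ k < i, word k x ∉ Λ ∪ I) ∧
        (s ∈ Λ ∪ I) ∧ (s ∈ Λ ∨ cyl word s ⊆ H)} ≤ sm w Λ := by
  set L : Set S := {s | (∃ x i, s = word i x ∧ ∀ k < i, word k x ∉ Λ ∪ I) ∧
        (s ∈ Λ ∪ I) ∧ (s ∈ Λ ∨ cyl word s ⊆ H)} with hL
  set R : S → Set S := fun s => {t | t ∈ Λ ∧ ∃ y i j, i ≤ j ∧ s = word i y ∧ t = word j y} with hR
  have hcov : ∀ s ∈ L, Cov word (cyl word s) (R s) := by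
    rintro s ⟨⟨x, i, rfl, hmin⟩, -, hs⟩ y ⟨i', hy⟩
    have hi := hlen _ _ _ _ hy
    subst hi
    rcases hs with hs | hs
    · exact ⟨i', by rwa [hy], y, i', i', le_rfl, hy.symm, rfl⟩
    · obtain ⟨j, hj⟩ := hΛ y (hs ⟨i', hy⟩)
      refine ⟨j, hj, y, i', j, ?_, hy.symm, rfl⟩
      by_contra hlt
      push Not at hlt
      apply hmin j hlt
      rw [← hpre i' j y x hlt.le hy]
      exact Or.inl hj
  have huniq : ∀ s ∈ L, ∀ s' ∈ L, ∀ t, t ∈ R s → t ∈ R s' → s = s' := by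
    have aux : ∀ i i' z, word i z ∈ L → word i' z ∈ L → ¬ i < i' := by
      rintro i i' z ⟨-, h1, -⟩ ⟨⟨x, m, hx, hmin⟩, -, -⟩ hlt
      have := hlen _ _ _ _ hx
      subst this
      apply hmin i hlt
      rwa [← hpre i' i z x hlt.le hx]
    rintro s hs s' hs' t ⟨-, y, i, j, hij, rfl, rfl⟩ ⟨-, y', i', j', hij', rfl, ht⟩
    have := hlen _ _ _ _ ht
    subst this
    rw [← hpre j i' y y' hij' ht] at hs' ⊢
    rcases lt_trichotomy i i' with h | h | h
    · exact absurd h (aux _ _ _ hs hs')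
    · rw [h]
    · exact absurd h (aux _ _ _ hs' hs)
  classical
  calc sm (fun s => M word w (cyl word s)) L
      ≤ ∑' s, ∑' t, L.indicator (fun s => (R s).indicator w t) s := by
        refine ENNReal.tsum_le_tsum fun s => ?_
        by_cases hs : s ∈ L
        · simp only [Set.indicator_of_mem hs]
          exact M_le (hcov s hs)
        · simp [Set.indicator_of_notMem hs]
    _ = ∑' t, ∑' s, L.indicator (fun s => (R s).indicator w t) s := ENNReal.tsum_comm
    _ ≤ ∑' t, Λ.indicator w t := by
        refine ENNReal.tsum_le_tsum fun t => ?_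
        by_cases ht : ∃ s ∈ L, t ∈ R s
        · obtain ⟨s, hs, hts⟩ := ht
          rw [tsum_eq_single s]
          · simp only [Set.indicator_of_mem hs, Set.indicator_of_mem hts,
              Set.indicator_of_mem hts.1]
            exact le_rfl
          · intro s' hs'
            by_cases h1 : s' ∈ L
            · rw [Set.indicator_of_mem h1, Set.indicator_of_notMem]
              exact fun h2 => hs' (huniq _ h1 _ hs t h2 hts)
            · rw [Set.indicator_of_notMem h1]
        · have : ∀ s, L.indicator (fun s => (R s).indicator w t) s = 0 := by
            intro s
            by_cases h1 : s ∈ L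
            · rw [Set.indicator_of_mem h1, Set.indicator_of_notMem]
              exact fun h2 => ht ⟨s, h1, h2⟩
            · rw [Set.indicator_of_notMem h1]
          simp [this]

lemma open_cont [Countable S] (hw : ∀ s, w s ≠ ⊤) (hfin : M word w univ ≠ ⊤)
    (hlen : ∀ n m x y, word n x = word m y → n = m)
    (hpre : ∀ n k x y, k ≤ n → word n x = word n y → word k x = word k y)
    (H : ℕ → Set X) (hmono : Monotone H)
    (hopen : ∀ n, ∀ x ∈ H n, ∃ k, cyl word (word k x) ⊆ H n) :
    M word w (⋃ n, H n) ≤ ⨆ n, M word w (H n) := by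
  refine ENNReal.le_of_forall_pos_le_add fun e he _ => ?_
  have he' : (e : ℝ≥0∞) ≠ 0 := by simpa using he.ne'
  have hc := fun n => exists_cov (Z := H n) (word := word) (w := w)
    (ne_top_of_le_ne_top hfin (M_mono (subset_univ _))) he'
  choose Λ hΛ hΛs using hc
  set I : Set S := {s | ∃ m, cyl word s ⊆ H m} with hI
  set L : ℕ → Set S := fun n => {s | (∃ x i, s = word i x ∧ ∀ k < i, word k x ∉ Λ n ∪ I) ∧
        (s ∈ Λ n ∪ I) ∧ (s ∈ Λ n ∨ cyl word s ⊆ H n)} with hL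
  have hLs : ∀ n, sm (fun s => M word w (cyl word s)) (L n) ≤ (⨆ n, M word w (H n)) + e :=
    fun n => (exists_stop hlen hpre I (H n) (Λ n) (hΛ n)).trans
      ((hΛs n).trans (by gcongr; exact le_iSup (fun n => M word w (H n)) n))
  let u : Ultrafilter ℕ := hyperfilter ℕ
  have hu : (u : Filter ℕ) ≤ atTop := Nat.hyperfilter_le_atTop
  set G : Set S := {s | ∀ᶠ n in (u : Filter ℕ), s ∈ L n} with hG
  have hcov : Cov word (⋃ n, H n) G := by
    intro z hz
    obtain ⟨n0, hz⟩ := mem_iUnion.1 hz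
    classical
    have hex : ∃ k, word k z ∈ I := by
      obtain ⟨k, hk⟩ := hopen n0 z hz
      exact ⟨k, n0, hk⟩
    obtain ⟨m0, hm0⟩ := Nat.find_spec hex
    have hn : ∀ n ≥ m0, ∃ k ∈ Set.Iic (Nat.find hex), word k z ∈ L n := by
      intro n hn
      have hex' : ∃ k, word k z ∈ Λ n ∪ I := ⟨_, Or.inr (Nat.find_spec hex)⟩
      have hle : Nat.find hex' ≤ Nat.find hex := Nat.find_min' _ (Or.inr (Nat.find_spec hex))
      refine ⟨Nat.find hex', hle, ⟨z, _, rfl, fun k hk => Nat.find_min hex' hk⟩,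
        Nat.find_spec hex', ?_⟩
      rcases hle.lt_or_eq with h | h
      · rcases Nat.find_spec hex' with h1 | h1
        · exact Or.inl h1
        · exact absurd h1 (Nat.find_min hex h)
      · right
        rw [h]
        exact hm0.trans (hmono hn)
    have hev : (⋃ k ∈ Set.Iic (Nat.find hex), {n | word k z ∈ L n}) ∈ u := by
      have : ∀ᶠ n in (u : Filter ℕ), n ≥ m0 := hu (eventually_ge_atTop m0)
      filter_upwards [this] with n h
      simpa using hn n h
    obtain ⟨k, -, hk⟩ := (Ultrafilter.finite_biUnion_mem_iff (Set.finite_Iic _)).1 hev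
    exact ⟨k, hk⟩
  refine (M_le_sm_cyl hw hcov).trans ?_
  rw [sm, ENNReal.tsum_eq_iSup_sum]
  refine iSup_le fun F => ?_
  classical
  have hev : ∀ᶠ n in (u : Filter ℕ), ∀ s ∈ F, s ∈ G → s ∈ L n := by
    rw [Filter.eventually_all_finset]
    intro s _
    by_cases hs : s ∈ G
    · exact hs.mono fun n h _ => h
    · exact Eventually.of_forall fun n h => absurd h hs
  obtain ⟨n, hn⟩ := hev.exists
  refine le_trans ?_ (hLs n)
  refine le_trans ?_ (ENNReal.sum_le_tsum F)
  refine Finset.sum_le_sum fun s hs => ?_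
  by_cases h : s ∈ G
  · rw [Set.indicator_of_mem h, Set.indicator_of_mem (hn s hs h)]
  · rw [Set.indicator_of_notMem h]
    exact zero_le

lemma cont [Countable S] (hw : ∀ s, w s ≠ ⊤) (hfin : M word w univ ≠ ⊤)
    (hlen : ∀ n m x y, word n x = word m y → n = m)
    (hpre : ∀ n k x y, k ≤ n → word n x = word n y → word k x = word k y)
    (Z : ℕ → Set X) (hmono : Monotone Z) :
    M word w (⋃ n, Z n) ≤ ⨆ n, M word w (Z n) := by
  have hf : ∀ A, M word w A ≠ ⊤ := fun A => ne_top_of_le_ne_top hfin (M_mono (subset_univ _))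
  refine ENNReal.le_of_forall_pos_le_add fun e he _ => ?_
  obtain ⟨d, hd, hds⟩ := ENNReal.exists_pos_sum_of_countable (ε := (e : ℝ≥0∞))
    (by simpa using he.ne') ℕ
  have hc := fun n => exists_cov (hf (Z n)) (e := d n) (by simpa using (hd n).ne')
  choose Λ hΛ hΛs using hc
  set G : ℕ → Set X := fun n => {x | ∃ k, word k x ∈ Λ n} with hG
  have hZG : ∀ n, Z n ⊆ G n := fun n z hz => hΛ n z hz
  have hGs : ∀ n, M word w (G n) ≤ M word w (Z n) + d n := fun n =>
    (M_le fun z hz => hz).trans (hΛs n)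
  set H : ℕ → Set X := fun n => ⋃ i ∈ Finset.range (n+1), G i with hH
  have hHsucc : ∀ n, H (n+1) = H n ∪ G (n+1) := by
    intro n
    simp only [hH]
    rw [Finset.range_add_one, Finset.set_biUnion_insert, Set.union_comm]
  have hGH : ∀ n, G n ⊆ H n := fun n =>
    Set.subset_biUnion_of_mem (u := G) (show n ∈ Finset.range (n+1) by simp)
  have hHmono : Monotone H := monotone_nat_of_le_succ fun n => by
    rw [hHsucc]; exact subset_union_left
  have hbound : ∀ n, M word w (H n) ≤ M word w (Z n) + ∑ i ∈ Finset.range (n+1), (d i : ℝ≥0∞) := by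
    intro n
    induction n with
    | zero => simpa [hH] using hGs 0
    | succ n ih =>
      have h1 := strong_sub (w := w) hlen hpre (H n) (G (n+1))
      rw [← hHsucc] at h1
      have h2 : M word w (Z n) ≤ M word w (H n ∩ G (n+1)) :=
        M_mono (subset_inter ((hZG n).trans (hGH n)) ((hmono n.le_succ).trans (hZG _)))
      have h3 : M word w (H (n+1)) + M word w (Z n) ≤
          (M word w (Z (n+1)) + ∑ i ∈ Finset.range (n+1+1), (d i : ℝ≥0∞)) + M word w (Z n) := by
        calc _ ≤ _ := by gcongr
          _ ≤ _ := h1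
          _ ≤ _ := add_le_add ih (hGs (n+1))
          _ = _ := by rw [Finset.sum_range_succ _ (n+1)]; ring
      exact (ENNReal.add_le_add_iff_right (hf _)).1 h3
  have hopen : ∀ n, ∀ x ∈ H n, ∃ k, cyl word (word k x) ⊆ H n := by
    intro n x hx
    simp only [hH, mem_iUnion] at hx
    obtain ⟨i, hi, k, hk⟩ := hx
    refine ⟨k, ?_⟩
    rintro y ⟨m, hm⟩
    simp only [hH, mem_iUnion]
    exact ⟨i, hi, m, by rwa [hm]⟩
  calc M word w (⋃ n, Z n) ≤ M word w (⋃ n, H n) :=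
        M_mono (iUnion_mono fun n => (hZG n).trans (hGH n))
    _ ≤ ⨆ n, M word w (H n) := open_cont hw hfin hlen hpre H hHmono hopen
    _ ≤ _ := iSup_le fun n => (hbound n).trans (add_le_add
        (le_iSup (fun n => M word w (Z n)) n) ((ENNReal.sum_le_tsum _).trans hds.le))

lemma box_subset {O : Set (ℕ → ℕ)} (hO : IsOpen O) (b : ℕ → ℕ)
    (h : {x : ℕ → ℕ | ∀ i, x i ≤ b i} ⊆ O) : ∃ k, {x : ℕ → ℕ | ∀ i < k, x i ≤ b i} ⊆ O := by
  by_contra hcon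
  push Not at hcon
  have h1 : ∀ k, ∃ x : ℕ → ℕ, (∀ i < k, x i ≤ b i) ∧ x ∉ O := by
    intro k
    obtain ⟨x, hx, hxO⟩ := Set.not_subset.1 (hcon k)
    exact ⟨x, hx, hxO⟩
  choose x hx hxO using h1
  have hcomp : IsCompact {x : ℕ → ℕ | ∀ i, x i ≤ b i} := by
    have := isCompact_univ_pi (s := fun i => Set.Iic (b i)) fun i => (Set.finite_Iic (b i)).isCompact
    convert this using 1
    ext x; simp [Pi.le_def]
  obtain ⟨y, hy, φ, hφ, hlim⟩ := hcomp.tendsto_subseq (x := fun k i => min (x k i) (b i))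
    (fun k i => min_le_right _ _)
  have hlim2 : Tendsto (x ∘ φ) atTop (nhds y) := by
    rw [tendsto_pi_nhds] at hlim ⊢
    intro i
    refine (hlim i).congr' ?_
    filter_upwards [eventually_gt_atTop i] with n hn
    exact min_eq_left (hx (φ n) i (hn.trans_le (hφ.id_le n)))
  obtain ⟨n, hn⟩ := (hlim2.eventually (hO.mem_nhds (h hy))).exists
  exact hxO _ hn

lemma exists_compact [TopologicalSpace X] [Countable S] (hw : ∀ s, w s ≠ ⊤)
    (hfin : M word w univ ≠ ⊤)
    (hlen : ∀ n m x y, word n x = word m y → n = m)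
    (hpre : ∀ n k x y, k ≤ n → word n x = word n y → word k x = word k y)
    (hop : ∀ n s, IsOpen {x | word n x = s})
    {g : (ℕ → ℕ) → X} (hg : Continuous g) {c : ℝ≥0∞} (hc : c < M word w (range g)) :
    ∃ K ⊆ range g, IsCompact K ∧ c ≤ M word w K := by
  let A : (ℕ → ℕ) → ℕ → Set (ℕ → ℕ) := fun b k => {x | ∀ i < k, x i ≤ b i}
  have step : ∀ k b, c < M word w (g '' A b k) →
      ∃ j, c < M word w (g '' A (Function.update b k j) (k+1)) := by
    intro k b hb
    have hU : g '' A b k ⊆ ⋃ j, g '' A (Function.update b k j) (k+1) := by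
      rintro _ ⟨x, hx, rfl⟩
      refine mem_iUnion.2 ⟨x k, x, ?_, rfl⟩
      intro i hi
      rcases Nat.lt_succ_iff_lt_or_eq.1 hi with h | h
      · rw [Function.update_of_ne h.ne]
        exact hx i h
      · subst h
        simp
    have hm : Monotone fun j => g '' A (Function.update b k j) (k+1) := by
      intro j j' hjj
      refine image_mono fun x hx i hi => (hx i hi).trans ?_
      by_cases h : i = k
      · subst h
        simpa using hjj
      · simp [Function.update_of_ne h]
    exact lt_iSup_iff.1 (hb.trans_le ((M_mono hU).trans (cont hw hfin hlen hpre _ hm)))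
  choose! j hj using step
  let F : ℕ → (ℕ → ℕ) := fun k => Nat.rec (fun _ => 0) (fun k b => Function.update b k (j k b)) k
  have hFs : ∀ k, F (k+1) = Function.update (F k) k (j k (F k)) := fun k => rfl
  have hF : ∀ k, c < M word w (g '' A (F k) k) := by
    intro k
    induction k with
    | zero =>
      have : A (F 0) 0 = univ := by ext; simp [A]
      rw [this, image_univ]
      exact hc
    | succ k ih =>
      rw [hFs]
      exact hj k (F k) ih
  let b : ℕ → ℕ := fun i => F (i+1) i
  have hFb : ∀ k, ∀ i < k, F k i = b i := by
    intro k
    induction k with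
    | zero => intro i hi; omega
    | succ k ih =>
      intro i hi
      rcases Nat.lt_succ_iff_lt_or_eq.1 hi with h | h
      · rw [hFs, Function.update_of_ne h.ne, ih i h]
      · subst h
        rfl
  have hA : ∀ k, A (F k) k = A b k := by
    intro k
    ext x
    exact forall₂_congr fun i hi => by rw [hFb k i hi]
  have hcomp : IsCompact {x : ℕ → ℕ | ∀ i, x i ≤ b i} := by
    have := isCompact_univ_pi (s := fun i => Set.Iic (b i)) fun i => (Set.finite_Iic (b i)).isCompact
    convert this using 1
    ext x; simp [Pi.le_def]
  refine ⟨g '' {x : ℕ → ℕ | ∀ i, x i ≤ b i}, image_subset_range _ _, hcomp.image hg, ?_⟩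
  refine le_iInf fun Λ => ?_
  have hGo : IsOpen {x | ∃ n, word n x ∈ Λ.1} := by
    have : {x | ∃ n, word n x ∈ Λ.1} = ⋃ n, ⋃ s ∈ Λ.1, {x | word n x = s} := by
      ext x; simp
    rw [this]
    exact isOpen_iUnion fun n => isOpen_biUnion fun s _ => hop n s
  obtain ⟨k, hk⟩ := box_subset (hGo.preimage hg) b (fun x hx => Λ.2 _ ⟨x, hx, rfl⟩)
  have h1 := hF k
  rw [hA] at h1
  refine h1.le.trans (M_le ?_)
  rintro _ ⟨x, hx, rfl⟩
  exact hk hx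

end TreeCap

/-- inclusion of words over the finset into words over all sets -/
def TreeCap.inc {X : Type*} (𝒰 : Finset (Set X)) (s : Σ n : ℕ, Fin n → 𝒰) :
    Σ n : ℕ, Fin n → Set X := ⟨s.1, fun j => (s.2 j : Set X)⟩

lemma TreeCap.inc_injective {X : Type*} (𝒰 : Finset (Set X)) :
    Function.Injective (TreeCap.inc 𝒰) := by
  rintro ⟨n, a⟩ ⟨m, b⟩ h
  have h1 : n = m := congrArg Sigma.fst h
  subst h1
  have h2 : (fun j => (a j : Set X)) = fun j => (b j : Set X) := by
    simpa [TreeCap.inc] using h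
  congr 1
  funext j
  exact Subtype.ext (congrFun h2 j)

/-- inner regularity of `M_N^s(𝒰,f,·)` on analytic sets, by compact subsets. -/
theorem MUN_analytic_inner_regular {X : Type*} [MetricSpace X] [CompactSpace X]
    {T : X → X} (hT : Continuous T) {f : X → ℝ} (hf : Continuous f)
    {𝒰 : Finset (Set X)} (h𝒰 : IsClopenPartition 𝒰) (s : ℝ) (N : ℕ)
    {Z : Set X} (hZ : MeasureTheory.AnalyticSet Z) :
    MUN T f 𝒰 s N Z = ⨆ (K : Set X) (_ : K ⊆ Z ∧ IsCompact K), MUN T f 𝒰 s N K := by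
  classical
  obtain ⟨hcl, hun, hdis⟩ := h𝒰
  have hex : ∀ x : X, ∃ A : 𝒰, x ∈ (A : Set X) := by
    intro x
    have : x ∈ ⋃ A ∈ 𝒰, A := by rw [hun]; trivial
    simp only [mem_iUnion] at this
    obtain ⟨A, hA, hx⟩ := this
    exact ⟨⟨A, hA⟩, hx⟩
  choose c hc using hex
  have huniq : ∀ x (A : Set X), A ∈ 𝒰 → x ∈ A → (c x : Set X) = A := by
    intro x A hA hx
    by_contra hne
    exact Set.disjoint_left.1 (hdis (c x).2 hA hne) (hc x) hx
  let word : ℕ → X → (Σ n : ℕ, Fin n → 𝒰) := fun n x => ⟨N + n, fun j => c (T^[j.1] x)⟩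
  let w : (Σ n : ℕ, Fin n → 𝒰) → ℝ≥0∞ := fun V => cylWeight T f s (TreeCap.inc 𝒰 V)
  have hw : ∀ V, w V ≠ ⊤ := by
    intro V
    simp only [w, cylWeight]
    split_ifs
    · simp
    · exact ENNReal.ofReal_ne_top
  have hword : ∀ n x y, word n x = word n y ↔ ∀ j < N + n, c (T^[j] x) = c (T^[j] y) := by
    intro n x y
    simp only [word, Sigma.mk.injEq, heq_eq_eq, true_and, funext_iff]
    exact ⟨fun h j hj => h ⟨j, hj⟩, fun h j => h j.1 j.2⟩
  have hlen : ∀ n m x y, word n x = word m y → n = m := by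
    intro n m x y h
    have : N + n = N + m := congrArg Sigma.fst h
    omega
  have hpre : ∀ n k x y, k ≤ n → word n x = word n y → word k x = word k y := by
    intro n k x y hk h
    rw [hword] at h ⊢
    exact fun j hj => h j (by omega)
  have hop : ∀ n V, IsOpen {x | word n x = V} := by
    intro n V
    rw [isOpen_iff_mem_nhds]
    intro x hx
    have hsub : (⋂ j : Fin (N + n), T^[j.1] ⁻¹' (c (T^[j.1] x) : Set X)) ⊆ {x | word n x = V} := by
      intro y hy
      rw [mem_iInter] at hy
      change word n y = V
      rw [← show word n x = V from hx, hword]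
      intro j hj
      exact Subtype.ext (huniq _ _ (c (T^[j] x)).2 (hy ⟨j, hj⟩))
    refine mem_of_superset (IsOpen.mem_nhds ?_ ?_) hsub
    · exact isOpen_iInter_of_finite fun j => (hcl _ (c _).2).isOpen.preimage (hT.iterate _)
    · exact mem_iInter.2 fun j => hc _
  have hfin : TreeCap.M word w univ ≠ ⊤ := by
    have hcov : TreeCap.Cov word univ (range fun a : Fin N → 𝒰 => (⟨N, a⟩ : Σ n : ℕ, Fin n → 𝒰)) :=
      fun z _ => ⟨0, _, rfl⟩
    refine ne_top_of_le_ne_top ?_ (TreeCap.M_le hcov)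
    rw [TreeCap.sm, ← tsum_subtype, ← Set.Finite.coe_toFinset (Set.finite_range _),
      Finset.tsum_subtype']
    exact ENNReal.sum_ne_top.2 fun V _ => hw V
  have hM : ∀ Y, MUN T f 𝒰 s N Y = TreeCap.M word w Y := by
    intro Y
    apply le_antisymm
    · refine le_iInf fun Λ => ?_
      obtain ⟨Λ, hΛ⟩ := Λ
      refine (iInf₂_le (TreeCap.inc 𝒰 '' (Λ ∩ {V | N ≤ V.1}))
        ⟨(Set.to_countable _).image _, ?_, ?_⟩).trans ?_
      rotate_left
      · rintro _ ⟨V, ⟨-, hV⟩, rfl⟩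
        exact ⟨hV, fun j => (V.2 j).2⟩
      · intro z hz
        obtain ⟨n, hn⟩ := hΛ z hz
        refine mem_biUnion (mem_image_of_mem _ ⟨hn, Nat.le_add_right N n⟩) ?_
        exact mem_iInter.2 fun j => hc _
      · rw [tsum_image (f := cylWeight T f s) (TreeCap.inc_injective 𝒰).injOn,
          tsum_subtype (Λ ∩ {V | N ≤ V.1}) (fun V => cylWeight T f s (TreeCap.inc 𝒰 V))]
        exact ENNReal.tsum_le_tsum fun V =>
          Set.indicator_le_indicator_of_subset inter_subset_left (fun _ => zero_le) V
    · refine le_iInf₂ fun Λ hΛ => ?_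
      obtain ⟨-, hΛ1, hΛ2⟩ := hΛ
      have hcov : TreeCap.Cov word Y (TreeCap.inc 𝒰 ⁻¹' Λ) := by
        intro z hz
        obtain ⟨V, hV, hzV⟩ := mem_iUnion₂.1 (hΛ2 hz)
        obtain ⟨m, a⟩ := V
        obtain ⟨h1, h2⟩ := hΛ1 _ hV
        obtain ⟨n, rfl⟩ := Nat.exists_eq_add_of_le h1
        refine ⟨n, ?_⟩
        have : TreeCap.inc 𝒰 (word n z) = ⟨N + n, a⟩ := by
          simp only [TreeCap.inc, word, Sigma.mk.injEq, heq_eq_eq, true_and]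
          funext j
          exact huniq _ _ (h2 j) (mem_iInter.1 hzV j)
        rw [mem_preimage, this]
        exact hV
      refine (TreeCap.M_le hcov).trans ?_
      rw [tsum_subtype Λ (cylWeight T f s)]
      exact ENNReal.tsum_comp_le_tsum_of_injective (TreeCap.inc_injective 𝒰)
        (Λ.indicator (cylWeight T f s))
  simp only [hM]
  apply le_antisymm
  · rw [MeasureTheory.AnalyticSet] at hZ
    rcases hZ with hZ | ⟨g, hg, rfl⟩
    · subst hZ
      exact le_iSup₂_of_le ∅ ⟨subset_rfl, isCompact_empty⟩ le_rfl
    · refine le_of_forall_lt fun a ha => ?_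
      obtain ⟨a', h1, h2⟩ := exists_between ha
      obtain ⟨K, hK, hKc, hle⟩ := TreeCap.exists_compact hw hfin hlen hpre hop hg h2
      exact h1.trans_le (le_iSup₂_of_le K ⟨hK, hKc⟩ hle)
  · exact iSup₂_le fun K hK => TreeCap.M_mono hK.1
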